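/- Let N ≥ 2 and M ≥ 1, let Cb : Fin N → Fin M → ℝ and C : Fin N → Fin M → ℝ be the best-set and candidate cost matrices. Suppose there exist indices p q : Fin N such that the benefit B(p,q) = ∑_{r ∈ R_p} (Cb p r − min (C q r) (min_{i ≠ p} Cb i r)) is strictly positive, where R_p ⊆ Fin M is the set of indices r for which Cb p r ≤ Cb i r for all i. Then there exists a matrix Cb' differing from Cb in exactly one row, with that row taken from C, such that EMC(Cb') < EMC(Cb), where EMC(A) = (1/M)·∑_{j : Fin M} (min_{i : Fin N} A i j). (A single swap with strictly positive computed benefit strictly decreases the Expected Minimum Cost.) -/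

import Mathlib

/-- Expected Minimum Cost of a recourse-set cost matrix `A : Fin N → Fin M → ℝ`:
the average over the `M` cost-function samples of the minimum cost over the
`N` counterfactuals. -/
noncomputable def EMC {N M : ℕ} (hN : 1 ≤ N) (A : Fin N → Fin M → ℝ) : ℝ :=
  (1 / (M : ℝ)) *
    ∑ j : Fin M, Finset.univ.inf' ⟨⟨0, hN⟩, Finset.mem_univ _⟩ (fun i => A i j)

/-- `min_{i ≠ p} Cb i r`: the minimum cost in column `r` of `Cb` over all rows
other than `p` (nonempty since `N ≥ 2`). -/
noncomputable def minOther {N M : ℕ} (hN : 2 ≤ N) (Cb : Fin N → Fin M → ℝ)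
    (p : Fin N) (r : Fin M) : ℝ :=
  (Finset.univ.erase p).inf'
    (Finset.card_pos.mp (by
      rw [Finset.card_erase_of_mem (Finset.mem_univ p), Finset.card_univ,
        Fintype.card_fin]
      omega))
    (fun i => Cb i r)

/-- The benefit `B(p,q)` computed by Algorithm 4: the sum, over the
cost-function indices `r` for which row `p` attains the minimum of column `r`
of `Cb`, of `Cb p r − min (C q r) (min_{i ≠ p} Cb i r)`. -/
noncomputable def benefit {N M : ℕ} (hN : 2 ≤ N) (Cb C : Fin N → Fin M → ℝ)
    (p q : Fin N) : ℝ :=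
  ∑ r ∈ Finset.univ.filter (fun r : Fin M => ∀ i : Fin N, Cb p r ≤ Cb i r),
    (Cb p r - min (C q r) (minOther hN Cb p r))

theorem inf'_eq_inf_inf'_erase {ι α : Type*} [DecidableEq ι] [SemilatticeInf α] {s : Finset ι}
    {a : ι} (ha : a ∈ s) (hs : (s.erase a).Nonempty) (f : ι → α) :
    s.inf' ⟨a, ha⟩ f = f a ⊓ (s.erase a).inf' hs f := by
  rw [← Finset.inf'_insert]
  simp only [Finset.insert_erase ha]

section CostMatrix

variable {N M : ℕ} (hN : 2 ≤ N) (A C : Fin N → Fin M → ℝ) (p q : Fin N)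

theorem minOther_update (x : Fin M → ℝ) (j : Fin M) :
    minOther hN (Function.update A p x) p j = minOther hN A p j :=
  Finset.inf'_congr _ rfl fun _ hi => by rw [Function.update_of_ne (Finset.ne_of_mem_erase hi)]

theorem forall_le_iff_le_minOther (j : Fin M) :
    (∀ i, A p j ≤ A i j) ↔ A p j ≤ minOther hN A p j := by
  rw [minOther, Finset.le_inf'_iff]
  refine ⟨fun h i _ => h i, fun h i => ?_⟩
  rcases eq_or_ne i p with rfl | hi
  · exact le_rfl
  · exact h i (Finset.mem_erase_of_ne_of_mem hi (Finset.mem_univ i))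

theorem EMC_eq_sum_min_minOther :
    EMC (one_le_two.trans hN) A = 1 / (M : ℝ) * ∑ j, min (A p j) (minOther hN A p j) :=
  congrArg _ <| Finset.sum_congr rfl fun j _ =>
    inf'_eq_inf_inf'_erase (Finset.mem_univ p) _ fun i => A i j

theorem EMC_update (x : Fin M → ℝ) :
    EMC (one_le_two.trans hN) (Function.update A p x) =
      1 / (M : ℝ) * ∑ j, min (x j) (minOther hN A p j) := by
  simp only [EMC_eq_sum_min_minOther hN _ p, minOther_update, Function.update_self]

theorem benefit_le_sum_min_sub_min :
    benefit hN A C p q ≤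
      ∑ j, (min (A p j) (minOther hN A p j) - min (C q j) (minOther hN A p j)) := by
  rw [benefit, Finset.sum_filter]
  refine Finset.sum_le_sum fun j _ => ?_
  simp only [forall_le_iff_le_minOther hN]
  split_ifs with hp
  · rw [min_eq_left hp]
  · -- Where row `p` is not a minimizer, deleting it does not change the minimum of the column,
    -- so inserting the new row can only lower it.
    rw [min_eq_right (not_le.mp hp).le]
    exact sub_nonneg.mpr (min_le_right _ _)

theorem benefit_div_le_EMC_sub_EMC_update :
    benefit hN A C p q / M ≤
      EMC (one_le_two.trans hN) A - EMC (one_le_two.trans hN) (Function.update A p (C q)) := by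
  rw [EMC_update hN, EMC_eq_sum_min_minOther hN A p, ← mul_sub, ← Finset.sum_sub_distrib,
    one_div_mul_eq_div]
  exact div_le_div_of_nonneg_right (benefit_le_sum_min_sub_min hN A C p q) M.cast_nonneg

end CostMatrix

/-- A single swap with strictly positive computed benefit strictly decreases
the Expected Minimum Cost: if some pair `(p, q)` has `B(p,q) > 0`, then there
exists a matrix `Cb'` differing from `Cb` in exactly one row, with that row
taken from `C`, such that `EMC Cb' < EMC Cb`. -/
theorem exists_strict_emc_decrease {N M : ℕ} (hN : 2 ≤ N) (hM : 1 ≤ M)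
    (Cb C : Fin N → Fin M → ℝ)
    (h : ∃ p q : Fin N, 0 < benefit hN Cb C p q) :
    ∃ Cb' : Fin N → Fin M → ℝ,
      (∃ p : Fin N, Cb' p ≠ Cb p ∧ (∀ i : Fin N, i ≠ p → Cb' i = Cb i) ∧
        ∃ q : Fin N, Cb' p = C q) ∧
      EMC (by omega) Cb' < EMC (by omega) Cb := by
  obtain ⟨p, q, hpq⟩ := h
  have hlt : EMC (by omega) (Function.update Cb p (C q)) < EMC (by omega) Cb :=
    sub_pos.mp <| (div_pos hpq (Nat.cast_pos.mpr hM)).trans_le <|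
      benefit_div_le_EMC_sub_EMC_update hN Cb C p q
  have hne : C q ≠ Cb p := by
    intro heq
    rw [heq, Function.update_eq_self] at hlt
    exact lt_irrefl _ hlt
  refine ⟨Function.update Cb p (C q), ⟨p, ?_, fun i hi => Function.update_of_ne hi _ _, q,
    Function.update_self _ _ _⟩, hlt⟩
  rwa [Function.update_self]
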